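/- Non-identifiability of counterfactuals: for all φ₁, φ₂ ∈ [0,1), (i) the observational distributions coincide: the pushforward of μ × μ under (u₁, u₂) ↦ (u₁, F_{φ₁}(u₁, u₂)) equals the pushforward under (u₁, u₂) ↦ (u₁, F_{φ₂}(u₁, u₂)); (ii) for every a ∈ [0,1) the interventional distributions coincide: the pushforward of μ under u ↦ F_{φ₁}(a, u) equals the pushforward under u ↦ F_{φ₂}(a, u); yet (iii) if φ₁ ≠ φ₂, then for every factum (x₁, x₂) with 0 < x₁ < 1/2 and 0 ≤ x₂ < x₁ and every counterfactual intervention do(X₁ = a) with a ∈ [1/2, 1), the counterfactual outcomes differ: F_{φ₁}(a, x₂/x₁) ≠ F_{φ₂}(a, x₂/x₁). -/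

import Mathlib

/-!
Modulo 1, the wrapped shift `zeta φ` is the rotation `u ↦ u + φ` of the circle, and `[0,1)` with its
uniform law is a measurable copy of the circle with its Haar measure. Invariance of Haar measure
therefore makes the law of `zeta φ U₂`, hence that of `F φ a U₂` for each fixed `a`, independent of
`φ`; by Fubini the joint law of `(U₁, F φ U₁ U₂)` depends only on these laws. For a fixed noise
value `u`, in contrast, distinct `φ` translate its image on the circle to distinct points.
-/

open MeasureTheory

/-- The shift of `[0,1)` by `φ`, wrapped around modulo 1. -/
noncomputable def zeta (φ u : ℝ) : ℝ := if 1 ≤ u + φ then u + φ - 1 else u + φ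

/-- The structural function of the SCM: `X₂ = u₂·x₁` if `x₁ < 1/2`
and `X₂ = ζ_φ(u₂)` if `x₁ ≥ 1/2`. -/
noncomputable def F (φ x₁ u₂ : ℝ) : ℝ := if x₁ < 1 / 2 then u₂ * x₁ else zeta φ u₂

/-- The uniform probability measure on `[0,1)`. -/
noncomputable def unif : Measure ℝ := volume.restrict (Set.Ico (0 : ℝ) 1)

section Rotation

variable {T : ℝ} [hT : Fact (0 < T)]

lemma measurePreserving_coe_restrict_Ico (a : ℝ) :
    MeasurePreserving ((↑) : ℝ → AddCircle T) (volume.restrict (Set.Ico a (a + T))) := by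
  simpa only [restrict_Ico_eq_restrict_Ioc] using AddCircle.measurePreserving_mk T a

lemma measurePreserving_coe_equivIco (a : ℝ) :
    MeasurePreserving (fun x : AddCircle T => (AddCircle.equivIco T a x : ℝ)) volume
      (volume.restrict (Set.Ico a (a + T))) := by
  have hmeas : Measurable (fun x : AddCircle T => (AddCircle.equivIco T a x : ℝ)) :=
    measurable_subtype_coe.comp (AddCircle.measurableEquivIco T a).measurable
  have hcoe := measurePreserving_coe_restrict_Ico (T := T) a
  have hleft : (fun x : AddCircle T => (AddCircle.equivIco T a x : ℝ)) ∘ (↑)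
      =ᵐ[volume.restrict (Set.Ico a (a + T))] id := by
    filter_upwards [ae_restrict_mem measurableSet_Ico] with x hx
    simp only [Function.comp_apply, AddCircle.equivIco_coe_eq hx, id_eq]
  refine ⟨hmeas, ?_⟩
  rw [← hcoe.map_eq, Measure.map_map hmeas hcoe.measurable, Measure.map_congr hleft, Measure.map_id]

lemma measurePreserving_toIcoMod_add (a c : ℝ) :
    MeasurePreserving (fun x => toIcoMod hT.out a (x + c))
      (volume.restrict (Set.Ico a (a + T))) (volume.restrict (Set.Ico a (a + T))) :=
  (measurePreserving_coe_equivIco a).comp <|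
    (measurePreserving_add_right volume (c : AddCircle T)).comp
      (measurePreserving_coe_restrict_Ico a)

end Rotation

section Fibers

variable {α β γ : Type*} [MeasurableSpace α] [MeasurableSpace β] [MeasurableSpace γ]
  {μ : Measure α} {ν : Measure β} [SFinite ν] {f g : α → β → γ}

lemma map_prodMk_fst_apply (hf : Measurable f.uncurry) {s : Set (α × γ)} (hs : MeasurableSet s) :
    (μ.prod ν).map (fun p => (p.1, f p.1 p.2)) s = ∫⁻ a, ν.map (f a) (Prod.mk a ⁻¹' s) ∂μ := by
  have hpair : Measurable (fun p : α × β => (p.1, f p.1 p.2)) := measurable_fst.prodMk hf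
  rw [Measure.map_apply hpair hs, Measure.prod_apply (hpair hs)]
  refine lintegral_congr fun a => ?_
  rw [Measure.map_apply hf.of_uncurry_left (measurable_prodMk_left hs)]
  rfl

lemma map_prodMk_fst_congr (hf : Measurable f.uncurry) (hg : Measurable g.uncurry)
    (h : ∀ᵐ a ∂μ, ν.map (f a) = ν.map (g a)) :
    (μ.prod ν).map (fun p => (p.1, f p.1 p.2)) = (μ.prod ν).map (fun p => (p.1, g p.1 p.2)) := by
  ext s hs
  rw [map_prodMk_fst_apply hf hs, map_prodMk_fst_apply hg hs]
  refine lintegral_congr_ae ?_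
  filter_upwards [h] with a ha
  rw [ha]

end Fibers

lemma coe_zeta (φ u : ℝ) : (zeta φ u : UnitAddCircle) = u + φ := by
  unfold zeta
  split_ifs
  · rw [AddCircle.coe_sub, AddCircle.coe_period, sub_zero, AddCircle.coe_add]
  · rw [AddCircle.coe_add]

lemma zeta_mem_Ico {φ u : ℝ} (hφ : φ ∈ Set.Ico (0 : ℝ) 1) (hu : u ∈ Set.Ico (0 : ℝ) 1) :
    zeta φ u ∈ Set.Ico (0 : ℝ) 1 := by
  obtain ⟨hφ₀, hφ₁⟩ := hφ
  obtain ⟨hu₀, hu₁⟩ := hu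
  unfold zeta
  split_ifs <;> constructor <;> linarith

lemma zeta_eq_toIcoMod {φ u : ℝ} (hφ : φ ∈ Set.Ico (0 : ℝ) 1) (hu : u ∈ Set.Ico (0 : ℝ) 1) :
    zeta φ u = toIcoMod one_pos 0 (u + φ) := by
  have hmem : zeta φ u ∈ Set.Ico (0 : ℝ) (0 + 1) := by
    simpa only [zero_add] using zeta_mem_Ico hφ hu
  calc zeta φ u = AddCircle.equivIco 1 0 (zeta φ u : UnitAddCircle) := by
        rw [AddCircle.equivIco_coe_eq hmem]
    _ = AddCircle.equivIco 1 0 (u + φ : UnitAddCircle) := by rw [coe_zeta]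
    _ = toIcoMod one_pos 0 (u + φ) := rfl

lemma injOn_zeta (u : ℝ) : Set.InjOn (fun φ => zeta φ u) (Set.Ico 0 1) := by
  intro φ hφ ψ hψ h
  have hcoe : (u + φ : UnitAddCircle) = u + ψ := by
    rw [← coe_zeta, ← coe_zeta]
    exact congrArg _ h
  rw [← zero_add (1 : ℝ)] at hφ hψ
  exact (AddCircle.coe_eq_coe_iff_of_mem_Ico hφ hψ).1 (add_left_cancel hcoe)

lemma measurable_zeta (φ : ℝ) : Measurable (zeta φ) :=
  .ite (measurableSet_le (by fun_prop) (by fun_prop)) (by fun_prop) (by fun_prop)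

lemma measurePreserving_zeta {φ : ℝ} (hφ : φ ∈ Set.Ico (0 : ℝ) 1) :
    MeasurePreserving (zeta φ) unif unif := by
  have hzeta : zeta φ =ᵐ[unif] fun u => toIcoMod one_pos 0 (u + φ) := by
    filter_upwards [ae_restrict_mem measurableSet_Ico] with u hu using zeta_eq_toIcoMod hφ hu
  refine ⟨measurable_zeta φ, ?_⟩
  rw [Measure.map_congr hzeta]
  simpa only [unif, zero_add] using (measurePreserving_toIcoMod_add (T := 1) 0 φ).map_eq

lemma F_of_lt {a : ℝ} (ha : a < 1 / 2) (φ : ℝ) : F φ a = fun u => u * a :=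
  funext fun _ => if_pos ha

lemma F_of_le {a : ℝ} (ha : 1 / 2 ≤ a) (φ : ℝ) : F φ a = zeta φ :=
  funext fun _ => if_neg ha.not_gt

lemma measurable_uncurry_F (φ : ℝ) : Measurable (F φ).uncurry :=
  .ite (measurableSet_lt (by fun_prop) (by fun_prop)) (by fun_prop)
    ((measurable_zeta φ).comp measurable_snd)

lemma map_F_unif_congr {φ₁ φ₂ : ℝ} (hφ₁ : φ₁ ∈ Set.Ico (0 : ℝ) 1) (hφ₂ : φ₂ ∈ Set.Ico (0 : ℝ) 1)
    (a : ℝ) : unif.map (F φ₁ a) = unif.map (F φ₂ a) := by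
  rcases lt_or_ge a (1 / 2) with ha | ha
  · rw [F_of_lt ha, F_of_lt ha]
  · rw [F_of_le ha, F_of_le ha, (measurePreserving_zeta hφ₁).map_eq,
      (measurePreserving_zeta hφ₂).map_eq]

lemma injOn_F {a : ℝ} (ha : 1 / 2 ≤ a) (u : ℝ) : Set.InjOn (fun φ => F φ a u) (Set.Ico 0 1) := by
  simpa only [F_of_le ha] using injOn_zeta u

instance : SFinite unif :=
  inferInstanceAs (SFinite (volume.restrict _))

/-- Non-identifiability of counterfactuals: the SCMs `M_φ` share (i) the same
observational distribution and (ii) the same interventional distributions for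
every intervention `do(X₁ = a)`, and yet (iii) for distinct parametrizations and
any factum `(x₁, x₂)` with `0 < x₁ < 1/2`, `0 ≤ x₂ < x₁`, the counterfactual
outcomes under `do(X₁ = a)` with `a ∈ [1/2, 1)` differ. -/
theorem counterfactual_nonidentifiability (φ₁ φ₂ : ℝ)
    (hφ₁ : φ₁ ∈ Set.Ico (0 : ℝ) 1) (hφ₂ : φ₂ ∈ Set.Ico (0 : ℝ) 1) :
    (Measure.map (fun u : ℝ × ℝ => (u.1, F φ₁ u.1 u.2)) (unif.prod unif) =
      Measure.map (fun u : ℝ × ℝ => (u.1, F φ₂ u.1 u.2)) (unif.prod unif)) ∧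
    (∀ a ∈ Set.Ico (0 : ℝ) 1,
      Measure.map (fun u => F φ₁ a u) unif = Measure.map (fun u => F φ₂ a u) unif) ∧
    (φ₁ ≠ φ₂ → ∀ x₁ x₂ : ℝ, 0 < x₁ → x₁ < 1 / 2 → 0 ≤ x₂ → x₂ < x₁ →
      ∀ a ∈ Set.Ico (1 / 2 : ℝ) 1, F φ₁ a (x₂ / x₁) ≠ F φ₂ a (x₂ / x₁)) := by
  refine ⟨?_, fun a _ => map_F_unif_congr hφ₁ hφ₂ a, fun hne x₁ x₂ _ _ _ _ a ha => ?_⟩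
  · exact map_prodMk_fst_congr (measurable_uncurry_F φ₁) (measurable_uncurry_F φ₂)
      (ae_of_all _ (map_F_unif_congr hφ₁ hφ₂))
  · exact (injOn_F ha.1 (x₂ / x₁)).ne hφ₁ hφ₂ hne
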